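/- arXiv:0807.3632 — 2 statements merged into one kernel-verified Lean document; each statement's English description precedes it below -/
import Mathlib

section
/- Let G = (V,E) be a finite connected undirected graph with positive symmetric edge weights ω, and let κ_{ij} = h_{ij} + h_{ji} denote the commute time between two vertices i and j. Then κ_{ij} = 2·ω(G)·R_{ij}, where R_{ij} is the effective resistance between i and j and ω(G) is the total edge weight of G. -/
open Finset

variable {V : Type*}

/-- The total weight incident to a vertex: `ω(i) = Σ_l ω(i,l)`. -/
noncomputable def vWeight [Fintype V] (w : V → V → ℝ) (i : V) : ℝ :=
  ∑ l, w i l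

/-- The total weight of the graph (each edge counted once): `ω(G)`. -/
noncomputable def gWeight [Fintype V] (w : V → V → ℝ) : ℝ :=
  (∑ i, ∑ l, w i l) / 2

/-- Transition probabilities of the random walk on the weighted graph:
from `i`, move to `l` with probability `ω(i,l)/ω(i)`. -/
noncomputable def walkStep [Fintype V] (w : V → V → ℝ) (i l : V) : ℝ :=
  w i l / vWeight w i

/-- `w` is a system of positive symmetric edge weights on a finite connected undirected
graph: symmetric, nonnegative, zero on the diagonal (and on non-edges), and the graph
whose edges are the pairs with positive weight is connected. -/
def IsWeight [Fintype V] (w : V → V → ℝ) : Prop :=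
  (∀ a b, w a b = w b a) ∧ (∀ a b, 0 ≤ w a b) ∧ (∀ a, w a a = 0) ∧
    (∀ a b, Relation.ReflTransGen (fun x y => 0 < w x y) a b)

/-- `hitSurv p j n i` is the probability that the Markov chain with transition kernel `p`
started at `i` has not visited `j` at any of the times `0, 1, …, n`. -/
noncomputable def hitSurv {S : Type*} [Fintype S] [DecidableEq S] (p : S → S → ℝ) (j : S) :
    ℕ → S → ℝ
  | 0 => fun i => if i = j then 0 else 1
  | n + 1 => fun i => if i = j then 0 else ∑ l, p i l * hitSurv p j n l

/-- Expected hitting time of `j` from `i`: the expected number of steps for the chain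
started at `i` to first reach `j`, computed as `Σ_n P(T_j > n)`. -/
noncomputable def hitTime {S : Type*} [Fintype S] [DecidableEq S] (p : S → S → ℝ)
    (i j : S) : ℝ :=
  ∑' n : ℕ, hitSurv p j n i

/-- A unit-current potential from `i` to `j`: Kirchhoff's equations when a unit current
enters at `i` and leaves at `j`. -/
def IsUnitPotential [Fintype V] (w : V → V → ℝ) (i j : V) (φ : V → ℝ) : Prop :=
  (∀ k, k ≠ i → k ≠ j → ∑ l, w k l * (φ k - φ l) = 0) ∧
    (∑ l, w i l * (φ i - φ l) = 1) ∧
    (∑ l, w j l * (φ j - φ l) = -1)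

/-- `R` is the effective-resistance matrix of the weighted graph `w`:
`R a a = 0`, and for `a ≠ b`, `R a b = V_a - V_b` for a unit-current potential
from `a` to `b`. -/
def IsResistance [Fintype V] (w : V → V → ℝ) (R : V → V → ℝ) : Prop :=
  (∀ a, R a a = 0) ∧
    ∀ a b, a ≠ b → ∃ φ, IsUnitPotential w a b φ ∧ R a b = φ a - φ b

/-- The weight function of an unweighted graph: weight `1` on edges, `0` elsewhere. -/
noncomputable def aw (G : SimpleGraph V) [DecidableRel G.Adj] (a b : V) : ℝ :=
  if G.Adj a b then 1 else 0

/-- Probability of a given trajectory: `trajProb p i xs` is the probability that the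
chain started at `i` successively visits the vertices of the list `xs`. -/
noncomputable def trajProb {S : Type*} [Fintype S] (p : S → S → ℝ) : S → List S → ℝ
  | _, [] => 1
  | i, x :: xs => p i x * trajProb p x xs

/-- Probability that the walk started at `i` has not visited every vertex by time `n`. -/
noncomputable def notCoveredProb [Fintype V] [DecidableEq V] (p : V → V → ℝ) (n : ℕ)
    (i : V) : ℝ :=
  ∑ xs : Fin n → V, trajProb p i (List.ofFn xs) *
    (if (i :: List.ofFn xs).toFinset = Finset.univ then 0 else 1)

/-- The cover time from `i`: the expected number of steps for the walk started at `i`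
to have visited every vertex, computed as `Σ_n P(T_cov > n)`. -/
noncomputable def coverTime [Fintype V] [DecidableEq V] (p : V → V → ℝ) (i : V) : ℝ :=
  ∑' n : ℕ, notCoveredProb p n i

/-- `visitSurv p j k n i` is the probability that the chain started at `i` is at `k` at
time `n` without having visited `j` at any of the times `0, …, n`. -/
noncomputable def visitSurv [Fintype V] [DecidableEq V] (p : V → V → ℝ) (j k : V) :
    ℕ → V → ℝ
  | 0 => fun i => if i = j then 0 else if i = k then 1 else 0
  | n + 1 => fun i => if i = j then 0 else ∑ l, p i l * visitSurv p j k n l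

/-- `expVisits p i j k` is the expected number of visits to `k` (counting time `0`) of
the chain started at `i` strictly before its first visit to `j`. -/
noncomputable def expVisits [Fintype V] [DecidableEq V] (p : V → V → ℝ) (i j k : V) : ℝ :=
  ∑' n : ℕ, visitSurv p j k n i

/-- `reachBeforeAux p i j n l` is the probability that the walk started at `l` reaches `j`
within `n` steps without visiting `i` first. -/
noncomputable def reachBeforeAux [Fintype V] [DecidableEq V] (p : V → V → ℝ) (i j : V) :
    ℕ → V → ℝ
  | 0 => fun l => if l = j then 1 else 0
  | n + 1 => fun l =>
      if l = j then 1 else if l = i then 0 else ∑ m, p l m * reachBeforeAux p i j n m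

/-- The probability that the walk started at `i` reaches `j` before returning to `i`:
one step from `i` to `l`, then reach `j` before `i` (monotone limit in `n`). -/
noncomputable def escapeProb [Fintype V] [DecidableEq V] (p : V → V → ℝ) (i j : V) : ℝ :=
  ∑ l, p i l * ⨆ n, reachBeforeAux p i j n l

/-- `hitSurvSet p F n x` is the probability that the chain started at `x` has not visited
the set `F` at any of the times `0, …, n`. -/
noncomputable def hitSurvSet {S : Type*} [Fintype S] (p : S → S → ℝ) (F : S → Prop)
    [DecidablePred F] : ℕ → S → ℝ
  | 0 => fun x => if F x then 0 else 1
  | n + 1 => fun x => if F x then 0 else ∑ y, p x y * hitSurvSet p F n y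

/-- Expected hitting time of the set `F` from `x`, computed as `Σ_n P(T_F > n)`. -/
noncomputable def hitTimeSet {S : Type*} [Fintype S] (p : S → S → ℝ) (F : S → Prop)
    [DecidablePred F] (x : S) : ℝ :=
  ∑' n : ℕ, hitSurvSet p F n x

/-- The associated chain `𝒢` on pairs `(P, i)` (visited set, current vertex): from
`(P, i)` it moves to `(P ∪ {j}, j)` with probability `ω(i,j)/ω(i)`. -/
noncomputable def pairStep [Fintype V] [DecidableEq V] (w : V → V → ℝ)
    (s t : Finset V × V) : ℝ :=
  if t.1 = insert t.2 s.1 then walkStep w s.2 t.2 else 0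

/-- `exitProbAux p P j n i` is the probability that the walk started at `i` leaves `P`
within `n` steps and that the first vertex visited outside `P` is `j`. -/
noncomputable def exitProbAux [Fintype V] [DecidableEq V] (p : V → V → ℝ) (P : Finset V)
    (j : V) : ℕ → V → ℝ
  | 0 => fun i => if i ∈ P then 0 else if i = j then 1 else 0
  | n + 1 => fun i =>
      if i ∈ P then ∑ l, p i l * exitProbAux p P j n l else if i = j then 1 else 0

/-- The probability that the first vertex outside `P` visited by the walk started at `i`
is `j` (monotone limit in the number of allowed steps). -/
noncomputable def exitProb [Fintype V] [DecidableEq V] (p : V → V → ℝ) (P : Finset V)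
    (i j : V) : ℝ :=
  ⨆ n, exitProbAux p P j n i

/-- The negated weighted Laplacian `Δ` of the weighted graph `w` on `Fin n`. -/
noncomputable def negLaplacian (n : ℕ) (w : Fin n → Fin n → ℝ) :
    Matrix (Fin n) (Fin n) ℝ :=
  Matrix.of fun k l => if k = l then -(∑ m, w k m) else w k l

/-- `Δ₂`: the negated weighted Laplacian with its first row replaced by the first row of
the identity matrix. -/
noncomputable def delta2 (n : ℕ) (hn : 0 < n) (w : Fin n → Fin n → ℝ) :
    Matrix (Fin n) (Fin n) ℝ :=
  (negLaplacian n w).updateRow ⟨0, hn⟩ (fun l => if l = ⟨0, hn⟩ then 1 else 0)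

/-- The weight function obtained from `w` by adding weight `u` on the edge `{a, b}`. -/
noncomputable def addEdge [DecidableEq V] (w : V → V → ℝ) (a b : V) (u : ℝ)
    (x y : V) : ℝ :=
  w x y + (if (x = a ∧ y = b) ∨ (x = b ∧ y = a) then u else 0)

/-!
Hitting times solve a Poisson equation: if `L` is the Laplacian of `w`, `π` the vector of vertex
weights and `h_m(k)` the expected time to hit `m` from `k`, then `L h_m = π - 2 ω(G) δ_m`. The first
step gives this equation away from `m`, and its value at `m` is forced because the entries of
`L h_m` sum to zero. A unit potential `φ` from `i` to `j` solves the adjoint equation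
`Lᵀ φ = δ_i - δ_j`, so evaluating `⟨φ, L h_m⟩` in two ways gives
`h_m(i) - h_m(j) = ⟨φ, π⟩ - 2 ω(G) φ(m)`. Subtracting the case `m = i` from the case `m = j` gives
the commute time.

Hitting times are finite because `π` is invariant under the walk: `∑ₖ π(k) ℙₖ(T_m > n)` drops at
step `n` by `π(m)` times the probability that the walk from `m` needs more than `n + 1` steps to
return. Hence the mean return time to `m` is finite, and finiteness propagates along the edges.

For directed weights whose in- and out-weights agree at each vertex, `π` is still invariant, and
`Lᵀ` is the Laplacian of the reversed graph; there `φ` is a potential on the reversed graph.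
-/

section HittingTimes

open Matrix

variable {S : Type*} [Fintype S] [DecidableEq S] {p : S → S → ℝ} {π : S → ℝ} {j k : S}

lemma hitSurv_self (p : S → S → ℝ) (j : S) (n : ℕ) : hitSurv p j n j = 0 := by
  cases n <;> simp [hitSurv]

lemma hitTime_self (p : S → S → ℝ) (j : S) : hitTime p j j = 0 := by
  simp [hitTime, hitSurv_self]

lemma hitSurv_succ_of_ne (p : S → S → ℝ) (n : ℕ) (hkj : k ≠ j) :
    hitSurv p j (n + 1) k = (of p *ᵥ hitSurv p j n) k :=
  if_neg hkj

lemma hitSurv_succ_add_single (p : S → S → ℝ) (j : S) (n : ℕ) :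
    hitSurv p j (n + 1) + Pi.single j ((of p *ᵥ hitSurv p j n) j) =
      of p *ᵥ hitSurv p j n := by
  ext k
  rcases eq_or_ne k j with rfl | hkj
  · simp [hitSurv_self]
  · simp [hitSurv_succ_of_ne, hkj]

lemma hitSurv_nonneg (hp : 0 ≤ p) (j : S) (n : ℕ) : 0 ≤ hitSurv p j n := by
  induction n with
  | zero => intro k; simp only [hitSurv]; split_ifs <;> simp
  | succ n ih =>
    intro k
    rcases eq_or_ne k j with rfl | hkj
    · simp [hitSurv_self]
    · rw [hitSurv_succ_of_ne p n hkj]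
      exact dotProduct_nonneg_of_nonneg (hp k) ih

lemma mulVec_hitSurv_nonneg (hp : 0 ≤ p) (j : S) (n : ℕ) : 0 ≤ of p *ᵥ hitSurv p j n :=
  fun k => dotProduct_nonneg_of_nonneg (hp k) (hitSurv_nonneg hp j n)

lemma dotProduct_hitSurv_succ_add_le (hp : 0 ≤ p) (hπp : π ᵥ* of p ≤ π) (j : S) (n : ℕ) :
    π ⬝ᵥ hitSurv p j (n + 1) + π j * (of p *ᵥ hitSurv p j n) j ≤ π ⬝ᵥ hitSurv p j n :=
  calc π ⬝ᵥ hitSurv p j (n + 1) + π j * (of p *ᵥ hitSurv p j n) j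
      = π ⬝ᵥ of p *ᵥ hitSurv p j n := by
        rw [← dotProduct_single, ← dotProduct_add, hitSurv_succ_add_single]
    _ = (π ᵥ* of p) ⬝ᵥ hitSurv p j n := dotProduct_mulVec ..
    _ ≤ π ⬝ᵥ hitSurv p j n := dotProduct_le_dotProduct_of_nonneg_right hπp (hitSurv_nonneg hp j n)

/-- The `n`-th term is the probability that the walk from `j` has not returned to `j` by time
`n + 1`: this is the finiteness half of Kac's formula for the mean return time. -/
lemma summable_mulVec_hitSurv_self (hp : 0 ≤ p) (hπ : 0 ≤ π) (hπp : π ᵥ* of p ≤ π)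
    (hπj : 0 < π j) : Summable fun n => (of p *ᵥ hitSurv p j n) j := by
  refine (summable_mul_left_iff hπj.ne').1 <|
    summable_of_sum_range_le (c := π ⬝ᵥ hitSurv p j 0)
      (fun n => mul_nonneg hπj.le (mulVec_hitSurv_nonneg hp j n j)) fun n => ?_
  calc ∑ m ∈ range n, π j * (of p *ᵥ hitSurv p j m) j
      ≤ ∑ m ∈ range n, (π ⬝ᵥ hitSurv p j m - π ⬝ᵥ hitSurv p j (m + 1)) :=
        sum_le_sum fun m _ => by linarith [dotProduct_hitSurv_succ_add_le hp hπp j m]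
    _ = π ⬝ᵥ hitSurv p j 0 - π ⬝ᵥ hitSurv p j n := sum_range_sub' ..
    _ ≤ π ⬝ᵥ hitSurv p j 0 :=
        sub_le_self _ (dotProduct_nonneg_of_nonneg hπ (hitSurv_nonneg hp j n))

lemma summable_hitSurv_of_reflTransGen (hp : 0 ≤ p) (hπ : 0 ≤ π) (hπp : π ᵥ* of p ≤ π)
    (hπj : 0 < π j) (hjk : Relation.ReflTransGen (fun x y => 0 < p x y) j k) :
    Summable fun n => hitSurv p j n k := by
  induction hjk with
  | refl => simpa only [hitSurv_self] using summable_zero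
  | @tail b c _ hbc ih =>
    have hsum : Summable fun n => (of p *ᵥ hitSurv p j n) b := by
      rcases eq_or_ne b j with rfl | hbj
      · exact summable_mulVec_hitSurv_self hp hπ hπp hπj
      · simpa only [hitSurv_succ_of_ne p _ hbj] using (summable_nat_add_iff 1).2 ih
    have hle (n : ℕ) : p b c * hitSurv p j n c ≤ (of p *ᵥ hitSurv p j n) b :=
      single_le_sum (f := fun l => p b l * hitSurv p j n l)
        (fun l _ => mul_nonneg (hp b l) (hitSurv_nonneg hp j n l)) (mem_univ c)
    exact (summable_mul_left_iff hbc.ne').1 <|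
      hsum.of_nonneg_of_le (fun n => mul_nonneg hbc.le (hitSurv_nonneg hp j n c)) hle

lemma hitTime_eq_one_add_sum (hsum : ∀ l, Summable fun n => hitSurv p j n l) (hkj : k ≠ j) :
    hitTime p k j = 1 + ∑ l, p k l * hitTime p l j := by
  simp only [hitTime, ← tsum_mul_left]
  rw [(hsum k).tsum_eq_zero_add, ← Summable.tsum_finsetSum fun l _ => (hsum l).mul_left _]
  simp only [hitSurv, if_neg hkj]

end HittingTimes

section RandomWalk

open Matrix

variable [Fintype V] {w : V → V → ℝ} {j k l : V}

lemma two_mul_gWeight (w : V → V → ℝ) : 2 * gWeight w = ∑ k, vWeight w k :=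
  mul_div_cancel₀ _ two_ne_zero

lemma vWeight_nonneg (hw : 0 ≤ w) : 0 ≤ vWeight w :=
  fun k => sum_nonneg fun l _ => hw k l

lemma vWeight_pos (hw : 0 ≤ w) (hkl : 0 < w k l) : 0 < vWeight w k :=
  hkl.trans_le (single_le_sum (fun m _ => hw k m) (mem_univ l))

lemma walkStep_nonneg (hw : 0 ≤ w) : 0 ≤ walkStep w :=
  fun k l => div_nonneg (hw k l) (vWeight_nonneg hw k)

lemma walkStep_pos (hw : 0 ≤ w) (hkl : 0 < w k l) : 0 < walkStep w k l :=
  div_pos hkl (vWeight_pos hw hkl)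

lemma vWeight_mul_walkStep (hw : 0 ≤ w) (k l : V) : vWeight w k * walkStep w k l = w k l :=
  mul_div_cancel_of_imp' fun hk =>
    (sum_eq_zero_iff_of_nonneg fun m _ => hw k m).1 hk l (mem_univ l)

lemma vWeight_vecMul_walkStep (hw : 0 ≤ w) :
    vWeight w ᵥ* of (walkStep w) = vWeight (Function.swap w) :=
  funext fun l => sum_congr rfl fun k _ => vWeight_mul_walkStep hw k l

lemma IsUnitPotential.ne {i : V} {φ : V → ℝ} (hφ : IsUnitPotential w i j φ) : i ≠ j := by
  rintro rfl
  linarith [hφ.2.1, hφ.2.2]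

variable [DecidableEq V]

lemma summable_hitSurv_walkStep (hw : 0 ≤ w) (hbal : vWeight (Function.swap w) = vWeight w)
    (hjk : Relation.ReflTransGen (fun x y => 0 < w x y) j k) :
    Summable fun n => hitSurv (walkStep w) j n k := by
  rcases hjk.cases_head with rfl | ⟨l, hjl, -⟩
  · simpa only [hitSurv_self] using summable_zero
  · exact summable_hitSurv_of_reflTransGen (walkStep_nonneg hw) (vWeight_nonneg hw)
      ((vWeight_vecMul_walkStep hw).trans hbal).le (vWeight_pos hw hjl)
      (Relation.ReflTransGen.mono (fun _ _ => walkStep_pos hw) _ _ hjk)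

/-- The Laplacian `D - w` of a weighted, possibly directed, graph, where `D` is the diagonal matrix
of the out-weights. -/
noncomputable def weightedLaplacian (w : V → V → ℝ) : Matrix V V ℝ :=
  diagonal (vWeight w) - of w

lemma weightedLaplacian_mulVec_apply (w : V → V → ℝ) (f : V → ℝ) (k : V) :
    (weightedLaplacian w *ᵥ f) k = vWeight w k * f k - ∑ l, w k l * f l := by
  simp only [weightedLaplacian, sub_mulVec, Pi.sub_apply, mulVec_diagonal]
  rfl

lemma weightedLaplacian_mulVec_apply_eq_sum (w : V → V → ℝ) (f : V → ℝ) (k : V) :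
    (weightedLaplacian w *ᵥ f) k = ∑ l, w k l * (f k - f l) := by
  simp only [weightedLaplacian_mulVec_apply, vWeight, mul_sub, sum_sub_distrib, sum_mul]

lemma transpose_weightedLaplacian (hbal : vWeight (Function.swap w) = vWeight w) :
    (weightedLaplacian w)ᵀ = weightedLaplacian (Function.swap w) := by
  rw [weightedLaplacian, weightedLaplacian, hbal, transpose_sub, diagonal_transpose]
  rfl

lemma dotProduct_weightedLaplacian_mulVec (hbal : vWeight (Function.swap w) = vWeight w)
    (f g : V → ℝ) :
    f ⬝ᵥ weightedLaplacian w *ᵥ g = (weightedLaplacian (Function.swap w) *ᵥ f) ⬝ᵥ g := by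
  rw [dotProduct_mulVec, ← transpose_weightedLaplacian hbal, mulVec_transpose]

lemma sum_weightedLaplacian_mulVec (hbal : vWeight (Function.swap w) = vWeight w) (f : V → ℝ) :
    ∑ k, (weightedLaplacian w *ᵥ f) k = 0 := by
  have hone : weightedLaplacian (Function.swap w) *ᵥ 1 = 0 := by
    ext k
    simp [weightedLaplacian_mulVec_apply_eq_sum]
  rw [← one_dotProduct, dotProduct_weightedLaplacian_mulVec hbal, hone, zero_dotProduct]

lemma weightedLaplacian_mulVec_hitTime_of_ne (hw : 0 ≤ w)
    (hsum : ∀ l, Summable fun n => hitSurv (walkStep w) j n l) (hkj : k ≠ j) :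
    (weightedLaplacian w *ᵥ fun l => hitTime (walkStep w) l j) k = vWeight w k := by
  have hstep : vWeight w k * hitTime (walkStep w) k j =
      vWeight w k + ∑ l, w k l * hitTime (walkStep w) l j := by
    simp only [hitTime_eq_one_add_sum hsum hkj, mul_add, mul_one, mul_sum, ← mul_assoc,
      vWeight_mul_walkStep hw]
  rw [weightedLaplacian_mulVec_apply, hstep, add_sub_cancel_right]

lemma weightedLaplacian_mulVec_hitTime (hw : 0 ≤ w)
    (hbal : vWeight (Function.swap w) = vWeight w)
    (hconn : ∀ k, Relation.ReflTransGen (fun x y => 0 < w x y) j k) :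
    weightedLaplacian w *ᵥ (fun k => hitTime (walkStep w) k j) =
      vWeight w - Pi.single j (2 * gWeight w) := by
  set f := weightedLaplacian w *ᵥ fun k => hitTime (walkStep w) k j
  have hne (k : V) (hkj : k ≠ j) : f k = vWeight w k :=
    weightedLaplacian_mulVec_hitTime_of_ne hw
      (fun l => summable_hitSurv_walkStep hw hbal (hconn l)) hkj
  have hself : vWeight w j - f j = 2 * gWeight w :=
    calc vWeight w j - f j = ∑ k, (vWeight w k - f k) :=
          (Fintype.sum_eq_single j fun k hkj => sub_eq_zero.2 (hne k hkj).symm).symm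
      _ = 2 * gWeight w := by
          rw [sum_sub_distrib, sum_weightedLaplacian_mulVec hbal, sub_zero, two_mul_gWeight]
  ext k
  rcases eq_or_ne k j with rfl | hkj
  · simp [← hself]
  · simp [hne k hkj, hkj]

namespace IsUnitPotential

variable {i : V} {φ : V → ℝ}

lemma weightedLaplacian_mulVec (hφ : IsUnitPotential w i j φ) :
    weightedLaplacian w *ᵥ φ = Pi.single i 1 - Pi.single j 1 := by
  have hij := hφ.ne
  obtain ⟨hharm, hi, hj⟩ := hφ
  ext k
  rw [weightedLaplacian_mulVec_apply_eq_sum]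
  rcases eq_or_ne k i with rfl | hki
  · simp [hi, hij]
  rcases eq_or_ne k j with rfl | hkj
  · simp [hj, hki]
  · simp [hharm k hki hkj, hki, hkj]

lemma hitTime_sub_hitTime (hφ : IsUnitPotential (Function.swap w) i j φ) (hw : 0 ≤ w)
    (hbal : vWeight (Function.swap w) = vWeight w) {m : V}
    (hconn : ∀ k, Relation.ReflTransGen (fun x y => 0 < w x y) m k) :
    hitTime (walkStep w) i m - hitTime (walkStep w) j m =
      φ ⬝ᵥ vWeight w - 2 * gWeight w * φ m := by
  have hgreen :=
    dotProduct_weightedLaplacian_mulVec hbal φ fun k => hitTime (walkStep w) k m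
  rw [weightedLaplacian_mulVec_hitTime hw hbal hconn, hφ.weightedLaplacian_mulVec,
    dotProduct_sub, dotProduct_single, sub_dotProduct, single_one_dotProduct,
    single_one_dotProduct] at hgreen
  rw [← hgreen, mul_comm (φ m)]

end IsUnitPotential

end RandomWalk

theorem commute_time_resistance_general
    {V : Type*} [Fintype V] [DecidableEq V] {w : V → V → ℝ} (hw : 0 ≤ w)
    (hbal : vWeight (Function.swap w) = vWeight w)
    (hconn : ∀ a b, Relation.ReflTransGen (fun x y => 0 < w x y) a b)
    {i j : V} {φ : V → ℝ} (hφ : IsUnitPotential (Function.swap w) i j φ) :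
    hitTime (walkStep w) i j + hitTime (walkStep w) j i =
      2 * gWeight w * (φ i - φ j) := by
  have hi := hφ.hitTime_sub_hitTime hw hbal (hconn i)
  have hj := hφ.hitTime_sub_hitTime hw hbal (hconn j)
  rw [hitTime_self] at hi hj
  linarith

/-- Commute time and effective resistance: `κ_{ij} = 2·ω(G)·R_{ij}`. -/
theorem commute_time_resistance
    {V : Type*} [Fintype V] [DecidableEq V] (w : V → V → ℝ) (hw : IsWeight w)
    (i j : V) (hij : i ≠ j) (φ : V → ℝ) (hφ : IsUnitPotential w i j φ) :
    hitTime (walkStep w) i j + hitTime (walkStep w) j i =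
      2 * gWeight w * (φ i - φ j) := by
  have hswap : Function.swap w = w := funext₂ fun a b => hw.1 b a
  exact commute_time_resistance_general hw.2.1 (by rw [hswap]) hw.2.2.2 (by rwa [hswap])
end

section
/- Let G = (V,E) be a finite connected undirected graph with positive symmetric edge weights ω, and let i, j, k be three distinct vertices. Let V^{ij} denote the unit-current potential from i to j normalized so that V^{ij}_i = 0, and V^{ik} the unit-current potential from i to k normalized so that V^{ik}_i = 0. Then V^{ik}_j = V^{ij}_k (reciprocity of potentials). -/
open Finset

variable {V : Type*}

section WeightedLaplacian

open Matrix

variable [Fintype V] [DecidableEq V] {R : Type*}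

/-- The Laplacian matrix `D - W` of a weight function `w`, where `D` is the diagonal matrix of
total weights. A diagonal entry `w x x` cancels, so loops do not contribute. Kirchhoff's equations
prescribe the value of this matrix on a potential. -/
def weightedLapMatrix [AddCommGroup R] (w : V → V → R) : Matrix V V R :=
  diagonal (fun x => ∑ l, w x l) - of w

theorem isSymm_weightedLapMatrix [AddCommGroup R] {w : V → V → R}
    (hw : ∀ x y, w x y = w y x) : (weightedLapMatrix w).IsSymm :=
  (isSymm_diagonal _).sub (IsSymm.ext fun x y => hw y x)

theorem weightedLapMatrix_mulVec_apply [NonUnitalNonAssocRing R] (w : V → V → R) (φ : V → R)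
    (x : V) : (weightedLapMatrix w *ᵥ φ) x = ∑ l, w x l * (φ x - φ l) := by
  rw [weightedLapMatrix, sub_mulVec, Pi.sub_apply, mulVec_diagonal, sum_mul]
  simp only [mul_sub, sum_sub_distrib, mulVec, dotProduct, of_apply]

theorem dotProduct_weightedLapMatrix_mulVec_comm [NonUnitalCommRing R] {w : V → V → R}
    (hw : ∀ x y, w x y = w y x) (φ ψ : V → R) :
    φ ⬝ᵥ weightedLapMatrix w *ᵥ ψ = ψ ⬝ᵥ weightedLapMatrix w *ᵥ φ := by
  rw [← dotProduct_transpose_mulVec, isSymm_weightedLapMatrix hw]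

end WeightedLaplacian

namespace IsUnitPotential

open Matrix

variable [Fintype V] {w : V → V → ℝ} {a b : V} {φ : V → ℝ}

theorem ne_s6 (hφ : IsUnitPotential w a b φ) : a ≠ b := by
  rintro rfl
  linarith [hφ.2.1, hφ.2.2]

theorem weightedLapMatrix_mulVec [DecidableEq V] (hφ : IsUnitPotential w a b φ) :
    weightedLapMatrix w *ᵥ φ = Pi.single a 1 - Pi.single b 1 := by
  have hab := hφ.ne_s6
  obtain ⟨harmonic, source, sink⟩ := hφ
  ext x
  rw [weightedLapMatrix_mulVec_apply]
  obtain rfl | hxa := eq_or_ne x a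
  · simp [source, hab]
  obtain rfl | hxb := eq_or_ne x b
  · simp [sink, hxa]
  · simp [harmonic x hxa hxb, hxa, hxb]

theorem dotProduct_weightedLapMatrix_mulVec [DecidableEq V] (hφ : IsUnitPotential w a b φ)
    (ψ : V → ℝ) : ψ ⬝ᵥ weightedLapMatrix w *ᵥ φ = ψ a - ψ b := by
  rw [hφ.weightedLapMatrix_mulVec, dotProduct_sub, dotProduct_single_one, dotProduct_single_one]

end IsUnitPotential

theorem potential_reciprocity_general [Fintype V] {w : V → V → ℝ} (hw : ∀ x y, w x y = w y x)
    {a b c d : V} {φ ψ : V → ℝ} (hφ : IsUnitPotential w a b φ) (hψ : IsUnitPotential w c d ψ) :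
    ψ a - ψ b = φ c - φ d := by
  classical
  rw [← hφ.dotProduct_weightedLapMatrix_mulVec, ← hψ.dotProduct_weightedLapMatrix_mulVec,
    dotProduct_weightedLapMatrix_mulVec_comm hw]

/-- Reciprocity of potentials: with potentials normalized to vanish
at `i`, one has `V^{ik}_j = V^{ij}_k`. -/
theorem potential_reciprocity
    {V : Type*} [Fintype V] [DecidableEq V] (w : V → V → ℝ) (hw : IsWeight w)
    (i j k : V) (hij : i ≠ j) (hik : i ≠ k) (hjk : j ≠ k)
    (φij : V → ℝ) (hφij : IsUnitPotential w i j φij) (hφij0 : φij i = 0)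
    (φik : V → ℝ) (hφik : IsUnitPotential w i k φik) (hφik0 : φik i = 0) :
    φik j = φij k := by
  have reciprocity := potential_reciprocity_general hw.1 hφij hφik
  rwa [hφij0, hφik0, zero_sub, zero_sub, neg_inj] at reciprocity
end
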